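/- (TensorSketch for least squares with proximal term.) Let $P \in \mathbb{R}^{n_1 n_2 \cdots n_q \times s}$ have full column rank with $n_1 n_2 \cdots n_q > s$, let $B \in \mathbb{R}^{n_1 n_2 \cdots n_q \times n}$, $C \in \mathbb{R}^{s \times n}$, $\sigma > 0$, and let $S \in \mathbb{R}^{m \times n_1 n_2 \cdots n_q}$ be a random TensorSketch matrix generated by mutually independent 3-wise independent hash maps and mutually independent 4-wise independent sign functions. Let $X_{opt} = \arg\min_X \frac{1}{2}\|PX - B\|_F^2 + \frac{\sigma}{2}\|X - C\|_F^2$ and $\tilde{X}_{opt} = \arg\min_X \frac{1}{2}\|SPX - SB\|_F^2 + \frac{\sigma}{2}\|X - C\|_F^2$, and set $OPT = \frac{1}{2}\|P X_{opt} - B\|_F^2 + \frac{\sigma}{2}\|X_{opt} - C\|_F^2$. If $m = \max\{8 s^2 (2+3^q)/\delta,\; 8 s (2+3^q)/(\epsilon \delta)\}$, then with probability at least $1 - \delta$, $\frac{1}{2}\|P \tilde{X}_{opt} - B\|_F^2 + \frac{\sigma}{2}\|\tilde{X}_{opt} - C\|_F^2 \le (1 + \epsilon) \cdot OPT$. -/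

import Mathlib

open Matrix MeasureTheory

/-- The CountSketch-type matrix determined by a hash map `h` and a sign vector `v`:
`S j i = v i` if `h i = j` and `0` otherwise. -/
def countSketch {m : ℕ} {ι : Type*} (h : ι → Fin m) (v : ι → ℝ) :
    Matrix (Fin m) ι ℝ :=
  Matrix.of fun j i => if h i = j then v i else 0

/-- The combined TensorSketch hash map of a family of hash maps `h k : [n k] → [m]`:
`h(i₁,…,i_q) = ((∑ k (h_k(i_k) - 1)) mod m) + 1` (in zero-based form, the mod-`m` sum). -/
def hashFam {m : ℕ} [NeZero m] {q : ℕ} {n : Fin q → ℕ} (h : ∀ k, Fin (n k) → Fin m) :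
    (∀ k, Fin (n k)) → Fin m :=
  fun i => ⟨(∑ k, (h k (i k) : ℕ)) % m, Nat.mod_lt _ (Nat.pos_of_ne_zero (NeZero.ne m))⟩

/-- The TensorSketch matrix generated by hash maps `h k` and sign functions `v k`:
the CountSketch-type matrix with hash map `hashFam h` and sign `i ↦ ∏ k, v k (i k)`. -/
def tsMat {m q : ℕ} [NeZero m] {n : Fin q → ℕ}
    (h : ∀ k, Fin (n k) → Fin m) (v : ∀ k, Fin (n k) → ℝ) :
    Matrix (Fin m) (∀ k, Fin (n k)) ℝ :=
  countSketch (hashFam h) (fun i => ∏ k, v k (i k))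

/-- The squared Frobenius norm of a real matrix. -/
def frobSq {α β : Type*} [Fintype α] [Fintype β] (A : Matrix α β ℝ) : ℝ :=
  ∑ i, ∑ j, A i j ^ 2

/-- A random hash map `h : Ω → ι → Fin m` is `k`-wise independent: each value `h(i)` is
uniformly distributed on `[m]`, and any at most `k` values at distinct indices are mutually
independent (their joint distribution factorizes). -/
def KWiseIndepHash {Ω : Type*} [MeasurableSpace Ω] (μ : Measure Ω) (k : ℕ)
    {ι : Type*} {m : ℕ} (h : Ω → ι → Fin m) : Prop :=
  (∀ (i : ι) (j : Fin m), μ {ω | h ω i = j} = 1 / (m : ENNReal)) ∧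
  ∀ t : Finset ι, t.card ≤ k → ∀ j : ι → Fin m,
    μ {ω | ∀ i ∈ t, h ω i = j i} = ∏ i ∈ t, μ {ω | h ω i = j i}

/-- A random sign function `v : Ω → ι → ℝ` is `k`-wise independent: it takes values in
`{-1, 1}`, each value is uniform on `{-1, 1}`, and any at most `k` values at distinct
indices are mutually independent. -/
def KWiseIndepSign {Ω : Type*} [MeasurableSpace Ω] (μ : Measure Ω) (k : ℕ)
    {ι : Type*} (v : Ω → ι → ℝ) : Prop :=
  (∀ ω i, v ω i = 1 ∨ v ω i = -1) ∧
  (∀ (i : ι) (x : ℝ), x = 1 ∨ x = -1 → μ {ω | v ω i = x} = 1 / 2) ∧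
  ∀ t : Finset ι, t.card ≤ k → ∀ x : ι → ℝ,
    μ {ω | ∀ i ∈ t, v ω i = x i} = ∏ i ∈ t, μ {ω | v ω i = x i}

/-- The random hash maps `H k` and random sign functions `V k` are all mutually independent
(as finitely-valued random variables, their joint distribution factorizes). -/
def IndepHashSigns {Ω : Type*} [MeasurableSpace Ω] (μ : Measure Ω)
    {κ : Type*} [Fintype κ] {n : κ → ℕ} {m : ℕ}
    (H : ∀ k, Ω → Fin (n k) → Fin m) (V : ∀ k, Ω → Fin (n k) → ℝ) : Prop :=
  ∀ (g : ∀ k, Fin (n k) → Fin m) (w : ∀ k, Fin (n k) → ℝ),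
    μ {ω | (∀ k, H k ω = g k) ∧ (∀ k, V k ω = w k)} =
      (∏ k, μ {ω | H k ω = g k}) * ∏ k, μ {ω | V k ω = w k}

/-!
Let `T` whiten the quadratic part of the objective, `Tᵀ(PᵀP + σ)T = 1`, and write the sketched
minimizer as `X_opt + T D`. The excess loss is then exactly `½‖D‖²`, and subtracting the two normal
equations gives `(1 + E) D = -Q`, where `E` and `Q` are the errors of the sketched products
`(PT)ᵀ(PT)` and `(PT)ᵀ(P X_opt - B)`. If `‖E‖ ≤ 1/2` then `‖D‖² ≤ 4‖Q‖²`, so it remains to have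
`‖E‖² ≤ 1/4` and `‖Q‖² ≤ ε/4 ‖P X_opt - B‖²` at once; since `‖PT‖² ≤ s`, both follow from Markov's
inequality and the second moment of the error of a sketched product `AᵀB`.

For that moment, the expectation of a product of two entries of `SᵀS - 1` is at most `1/m` (the
probability of a hash collision, which only needs pairwise independence) times, in each of the `q`
tensor factors, the number of ways to pair up the four indices. Each pairing is a multilinear form
of norm at most `1` by Cauchy-Schwarz, and bounds of this kind multiply over tensor factors, so the
second moment is at most `3^q/m ‖A‖²‖B‖²`.
-/

section FrobeniusNorm

variable {α β : Type*} [Fintype α] [Fintype β]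

open scoped Matrix.Norms.Frobenius in
lemma frobSq_eq_norm_sq (A : Matrix α β ℝ) : frobSq A = ‖A‖ ^ 2 := by
  rw [frobenius_norm_def, ← Real.sqrt_eq_rpow, Real.sq_sqrt (by positivity)]
  simp [frobSq]

lemma frobSq_nonneg (A : Matrix α β ℝ) : 0 ≤ frobSq A :=
  frobSq_eq_norm_sq A ▸ sq_nonneg _

lemma frobSq_eq_trace (A : Matrix α β ℝ) : frobSq A = (Aᵀ * A).trace := by
  simp only [frobSq, trace, diag_apply, mul_apply, transpose_apply, ← sq]
  exact Finset.sum_comm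

lemma eq_zero_of_frobSq_eq_zero {A : Matrix α β ℝ} (h : frobSq A = 0) : A = 0 := by
  rwa [frobSq_eq_trace, ← conjTranspose_eq_transpose_of_trivial,
    trace_conjTranspose_mul_self_eq_zero_iff] at h

lemma frobSq_smul (t : ℝ) (A : Matrix α β ℝ) : frobSq (t • A) = t ^ 2 * frobSq A := by
  simp [frobSq, Finset.mul_sum, mul_pow]

lemma frobSq_one [DecidableEq α] : frobSq (1 : Matrix α α ℝ) = Fintype.card α := by
  simp [frobSq_eq_trace]

lemma frobSq_add (A B : Matrix α β ℝ) :
    frobSq (A + B) = frobSq A + 2 * (Aᵀ * B).trace + frobSq B := by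
  have hcomm : (Bᵀ * A).trace = (Aᵀ * B).trace := by
    rw [← trace_transpose, transpose_mul, transpose_transpose]
  simp only [frobSq_eq_trace, transpose_add, Matrix.add_mul, Matrix.mul_add, trace_add, hcomm]
  ring

open scoped Matrix.Norms.Frobenius in
lemma frobSq_le_of_add_mul_eq_neg {E : Matrix α α ℝ} {D Q : Matrix α β ℝ}
    (hE : frobSq E ≤ 1 / 4) (h : D + E * D = -Q) : frobSq D ≤ 4 * frobSq Q := by
  rw [frobSq_eq_norm_sq] at hE
  have hE' : ‖E‖ ≤ 1 / 2 := by nlinarith [norm_nonneg E]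
  have hD : ‖D‖ ≤ ‖Q‖ + 1 / 2 * ‖D‖ :=
    calc ‖D‖ = ‖-Q - E * D‖ := by rw [← h, add_sub_cancel_right]
      _ ≤ ‖Q‖ + ‖E * D‖ := by simpa using norm_sub_le (-Q) (E * D)
      _ ≤ ‖Q‖ + 1 / 2 * ‖D‖ := by
        gcongr
        exact (frobenius_norm_mul E D).trans (by gcongr)
  rw [frobSq_eq_norm_sq, frobSq_eq_norm_sq]
  nlinarith [norm_nonneg D, norm_nonneg Q]

end FrobeniusNorm

section RidgeRegression

open scoped ComplexOrder MatrixOrder Matrix.Norms.L2Operator in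
lemma exists_conjTranspose_mul_mul_eq_one {𝕜 α : Type*} [RCLike 𝕜] [Fintype α] [DecidableEq α]
    {M : Matrix α α 𝕜} (hM : M.PosDef) : ∃ T : Matrix α α 𝕜, Tᴴ * M * T = 1 := by
  obtain ⟨R, hR⟩ := CStarAlgebra.nonneg_iff_eq_star_mul_self.mp hM.posSemidef.nonneg
  rw [star_eq_conjTranspose] at hR
  have hdet : IsUnit R.det := by
    have hunit := hM.isUnit
    rw [hR, isUnit_iff_isUnit_det, det_mul] at hunit
    exact isUnit_of_mul_isUnit_right hunit
  refine ⟨R⁻¹, ?_⟩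
  rw [hR, ← Matrix.mul_assoc, ← conjTranspose_mul, mul_nonsing_inv R hdet, conjTranspose_one,
    Matrix.one_mul, mul_nonsing_inv R hdet]

lemma posDef_transpose_mul_self_add_smul_one {ι α : Type*} [Fintype ι] [Finite α]
    [DecidableEq α] (P : Matrix ι α ℝ) {σ : ℝ} (hσ : 0 < σ) :
    (Pᵀ * P + σ • (1 : Matrix α α ℝ)).PosDef :=
  PosDef.posSemidef_add (by simpa using posSemidef_conjTranspose_mul_self P)
    (PosDef.one.smul hσ)

variable {ι κ α β : Type*} [Fintype ι] [Fintype κ] [Fintype α]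

/-- The objective of least squares with a proximal term, `½‖KX - B‖² + (σ/2)‖X - C‖²`. -/
noncomputable def ridgeLoss [Fintype β] (σ : ℝ) (K : Matrix ι α ℝ) (B : Matrix ι β ℝ)
    (C X : Matrix α β ℝ) : ℝ :=
  1 / 2 * frobSq (K * X - B) + σ / 2 * frobSq (X - C)

/-- The gradient of `ridgeLoss σ K B C` at `X`; its vanishing is the normal equation. -/
def ridgeGradient (σ : ℝ) (K : Matrix ι α ℝ) (B : Matrix ι β ℝ) (C X : Matrix α β ℝ) :
    Matrix α β ℝ :=
  Kᵀ * (K * X - B) + σ • (X - C)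

lemma ridgeLoss_add [Fintype β] (σ : ℝ) (K : Matrix ι α ℝ) (B : Matrix ι β ℝ)
    (C X Z : Matrix α β ℝ) :
    ridgeLoss σ K B C (X + Z) = ridgeLoss σ K B C X + ((ridgeGradient σ K B C X)ᵀ * Z).trace
      + (1 / 2 * frobSq (K * Z) + σ / 2 * frobSq Z) := by
  have hres : K * (X + Z) - B = (K * X - B) + K * Z := by rw [Matrix.mul_add]; abel
  rw [ridgeLoss, ridgeLoss, ridgeGradient, hres, add_sub_right_comm X Z C, frobSq_add, frobSq_add]
  simp only [transpose_add, transpose_mul, transpose_transpose, transpose_smul, Matrix.add_mul,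
    trace_add, Matrix.smul_mul, trace_smul, Matrix.mul_assoc, smul_eq_mul]
  ring

lemma ridgeGradient_eq_zero_of_forall_le [Fintype β] {σ : ℝ} {K : Matrix ι α ℝ} {B : Matrix ι β ℝ}
    {C X : Matrix α β ℝ} (hX : ∀ Z, ridgeLoss σ K B C X ≤ ridgeLoss σ K B C Z) :
    ridgeGradient σ K B C X = 0 := by
  set G := ridgeGradient σ K B C X with hG
  have hquad (t : ℝ) :
      0 ≤ (1 / 2 * frobSq (K * G) + σ / 2 * frobSq G) * (t * t) + frobSq G * t + 0 := by
    have h := hX (X + t • G)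
    rw [ridgeLoss_add, ← hG, Matrix.mul_smul, Matrix.mul_smul, frobSq_smul, frobSq_smul,
      trace_smul, ← frobSq_eq_trace, smul_eq_mul] at h
    linarith
  have hdiscrim := discrim_le_zero hquad
  rw [discrim, mul_zero, sub_zero] at hdiscrim
  exact eq_zero_of_frobSq_eq_zero (pow_eq_zero_iff two_ne_zero |>.1
    (hdiscrim.antisymm (sq_nonneg _)))

/-- A change of variables `X = T D` in which the quadratic part of `ridgeLoss σ P B C` becomes
`½‖D‖²`. -/
def IsRidgeWhitening [DecidableEq α] (P : Matrix ι α ℝ) (σ : ℝ) (T : Matrix α α ℝ) : Prop :=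
  Tᵀ * (Pᵀ * P + σ • (1 : Matrix α α ℝ)) * T = 1

namespace IsRidgeWhitening

variable [DecidableEq α] {P : Matrix ι α ℝ} {σ : ℝ} {T : Matrix α α ℝ}

lemma exists_eq_mul (hT : IsRidgeWhitening P σ T) (Z : Matrix α β ℝ) :
    ∃ D : Matrix α β ℝ, Z = T * D := by
  refine ⟨Tᵀ * (Pᵀ * P + σ • (1 : Matrix α α ℝ)) * Z, ?_⟩
  rw [← Matrix.mul_assoc, mul_eq_one_comm.1 hT, Matrix.one_mul]

lemma gram_add (hT : IsRidgeWhitening P σ T) : (P * T)ᵀ * (P * T) + σ • (Tᵀ * T) = 1 := by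
  rw [← hT]
  simp only [transpose_mul, Matrix.mul_add, Matrix.add_mul, Matrix.mul_assoc, Matrix.smul_mul,
    Matrix.mul_smul, Matrix.one_mul]

lemma frobSq_add [Fintype β] (hT : IsRidgeWhitening P σ T) (D : Matrix α β ℝ) :
    frobSq (P * (T * D)) + σ * frobSq (T * D) = frobSq D := by
  have h := congrArg (fun M => (Dᵀ * (M * D)).trace) hT.gram_add
  simpa only [frobSq_eq_trace, transpose_mul, Matrix.mul_add, Matrix.add_mul, Matrix.mul_assoc,
    Matrix.smul_mul, Matrix.mul_smul, trace_add, trace_smul, smul_eq_mul, Matrix.one_mul] using h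

lemma frobSq_mul_le_card (hT : IsRidgeWhitening P σ T) (hσ : 0 ≤ σ) :
    frobSq (P * T) ≤ Fintype.card α := by
  have h := hT.frobSq_add (1 : Matrix α α ℝ)
  rw [Matrix.mul_one, frobSq_one] at h
  have := mul_nonneg hσ (frobSq_nonneg T)
  linarith

end IsRidgeWhitening

/-- The deviation `SᵀS - 1` of the Gram matrix of a sketching matrix `S` from its ideal value. -/
def gramError [DecidableEq ι] (S : Matrix κ ι ℝ) : Matrix ι ι ℝ :=
  Sᵀ * S - 1

/-- The error `(SA)ᵀ(SB) - AᵀB` of the sketched matrix product. -/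
def sketchError [DecidableEq ι] (S : Matrix κ ι ℝ) (A : Matrix ι α ℝ) (B : Matrix ι β ℝ) :
    Matrix α β ℝ :=
  Aᵀ * gramError S * B

variable [DecidableEq ι] [DecidableEq α] {P : Matrix ι α ℝ} {σ : ℝ} {T : Matrix α α ℝ}

lemma transpose_mul_ridgeGradient_sketch (hT : IsRidgeWhitening P σ T) (S : Matrix κ ι ℝ)
    (B : Matrix ι β ℝ) (C X D : Matrix α β ℝ) :
    Tᵀ * ridgeGradient σ (S * P) (S * B) C (X + T * D) =
      Tᵀ * ridgeGradient σ P B C X + sketchError S (P * T) (P * X - B)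
        + (D + sketchError S (P * T) (P * T) * D) := by
  have hD : D = ((P * T)ᵀ * (P * T) + σ • (Tᵀ * T)) * D := by rw [hT.gram_add, Matrix.one_mul]
  conv_rhs => enter [2, 1]; rw [hD]
  simp only [ridgeGradient, sketchError, gramError, transpose_mul, Matrix.mul_add, Matrix.mul_sub,
    Matrix.add_mul, Matrix.sub_mul, Matrix.mul_assoc, Matrix.smul_mul, Matrix.mul_smul, smul_add,
    smul_sub, Matrix.one_mul]
  abel

theorem ridgeLoss_le_of_frobSq_sketchError_le [Fintype β] (hT : IsRidgeWhitening P σ T) (hσ : 0 ≤ σ)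
    {S : Matrix κ ι ℝ} {B : Matrix ι β ℝ} {C X Y : Matrix α β ℝ} {ε : ℝ} (hε : 0 ≤ ε)
    (hX : ∀ Z, ridgeLoss σ P B C X ≤ ridgeLoss σ P B C Z)
    (hY : ∀ Z, ridgeLoss σ (S * P) (S * B) C Y ≤ ridgeLoss σ (S * P) (S * B) C Z)
    (hE : frobSq (sketchError S (P * T) (P * T)) ≤ 1 / 4)
    (hQ : frobSq (sketchError S (P * T) (P * X - B)) ≤ ε / 4 * frobSq (P * X - B)) :
    ridgeLoss σ P B C Y ≤ (1 + ε) * ridgeLoss σ P B C X := by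
  obtain ⟨D, hD⟩ := hT.exists_eq_mul (Y - X)
  obtain rfl : Y = X + T * D := by rw [← hD, add_sub_cancel]
  have hgrad := ridgeGradient_eq_zero_of_forall_le hX
  have hstep : D + sketchError S (P * T) (P * T) * D = -sketchError S (P * T) (P * X - B) := by
    have h := transpose_mul_ridgeGradient_sketch hT S B C X D
    rw [ridgeGradient_eq_zero_of_forall_le hY, hgrad, Matrix.mul_zero, zero_add] at h
    exact eq_neg_of_add_eq_zero_right h.symm
  have hexcess : ridgeLoss σ P B C (X + T * D) = ridgeLoss σ P B C X + 1 / 2 * frobSq D := by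
    rw [ridgeLoss_add, hgrad, transpose_zero, Matrix.zero_mul, trace_zero, ← hT.frobSq_add D]
    ring
  have hDle : frobSq D ≤ ε * frobSq (P * X - B) := by
    linarith [frobSq_le_of_add_mul_eq_neg hE hstep]
  have hprox : 0 ≤ ε * (σ / 2 * frobSq (X - C)) := by
    have := frobSq_nonneg (X - C)
    positivity
  rw [hexcess]
  unfold ridgeLoss
  linarith

end RidgeRegression

section L2Kernels

/-- The kernel `K` on `α^ι` is bounded by `c` as a multilinear form on nonnegative functions, with
respect to the Euclidean norm in each argument. -/
def HasL2Bound {ι α : Type*} [Fintype ι] [DecidableEq ι] [Fintype α] (K : (ι → α) → ℝ) (c : ℝ) :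
    Prop :=
  ∀ f : ι → α → ℝ, 0 ≤ f → ∑ x : ι → α, K x * ∏ i, f i (x i) ≤ c * ∏ i, √(∑ a, f i a ^ 2)

namespace HasL2Bound

variable {ι α β : Type*} [Fintype ι] [DecidableEq ι] [Fintype α] [Fintype β]
  {K K₁ K₂ : (ι → α) → ℝ} {c c₁ c₂ : ℝ}

lemma add (h₁ : HasL2Bound K₁ c₁) (h₂ : HasL2Bound K₂ c₂) :
    HasL2Bound (fun x => K₁ x + K₂ x) (c₁ + c₂) := fun f hf => by
  simpa only [add_mul, Finset.sum_add_distrib] using add_le_add (h₁ f hf) (h₂ f hf)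

lemma const_mul {r : ℝ} (hr : 0 ≤ r) (h : HasL2Bound K c) :
    HasL2Bound (fun x => r * K x) (r * c) := fun f hf => by
  simpa only [mul_assoc, Finset.mul_sum] using mul_le_mul_of_nonneg_left (h f hf) hr

lemma comp_perm (h : HasL2Bound K c) (e : Equiv.Perm ι) : HasL2Bound (fun x => K (x ∘ e)) c := by
  intro f hf
  have hK := h (fun i => f (e i)) (fun i => hf (e i))
  rw [Equiv.prod_comp e fun i => √(∑ a, f i a ^ 2)] at hK
  refine le_of_eq_of_le (Fintype.sum_equiv (e.symm.arrowCongr (Equiv.refl α)) _ _ fun x => ?_) hK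
  rw [← Equiv.prod_comp e fun i => f i (x i)]
  rfl

lemma comp_equiv {K : (ι → β) → ℝ} (h : HasL2Bound K c) (e : α ≃ β) :
    HasL2Bound (fun x => K (e ∘ x)) c := by
  intro f hf
  have hK := h (fun i b => f i (e.symm b)) (fun i b => hf i (e.symm b))
  have hnorm (i : ι) : ∑ b, f i (e.symm b) ^ 2 = ∑ a, f i a ^ 2 :=
    Equiv.sum_comp e.symm fun a => f i a ^ 2
  simp only [hnorm] at hK
  refine le_of_eq_of_le (Fintype.sum_equiv ((Equiv.refl ι).arrowCongr e) _ _ fun x => ?_) hK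
  simp [Equiv.arrowCongr, Function.comp_def]

lemma prod_mul {L : (ι → β) → ℝ} {d : ℝ} (hK : HasL2Bound K c) (hK₀ : 0 ≤ K)
    (hL : HasL2Bound L d) (hd : 0 ≤ d) :
    HasL2Bound (fun x : ι → α × β => K (fun i => (x i).1) * L (fun i => (x i).2)) (c * d) := by
  intro f hf
  let g : ι → α → ℝ := fun i a => √(∑ b, f i (a, b) ^ 2)
  have hg (i : ι) (a : α) : g i a ^ 2 = ∑ b, f i (a, b) ^ 2 :=
    Real.sq_sqrt (Finset.sum_nonneg fun _ _ => sq_nonneg _)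
  calc ∑ x : ι → α × β, K (fun i => (x i).1) * L (fun i => (x i).2) * ∏ i, f i (x i)
      = ∑ y : ι → α, K y * ∑ z : ι → β, L z * ∏ i, f i (y i, z i) := by
        simp only [Finset.mul_sum, ← Fintype.sum_prod_type', ← mul_assoc]
        exact Fintype.sum_equiv (Equiv.arrowProdEquivProdArrow ι (fun _ => α) (fun _ => β)) _ _
          fun x => rfl
    _ ≤ ∑ y : ι → α, K y * (d * ∏ i, g i (y i)) := by
        gcongr with y
        · exact hK₀ y
        · exact hL (fun i b => f i (y i, b)) fun i b => hf i (y i, b)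
    _ = d * ∑ y : ι → α, K y * ∏ i, g i (y i) := by
        simp only [Finset.mul_sum, mul_left_comm]
    _ ≤ d * (c * ∏ i, √(∑ a, g i a ^ 2)) := by
        gcongr
        exact hK g fun i a => Real.sqrt_nonneg _
    _ = c * d * ∏ i, √(∑ p, f i p ^ 2) := by
        simp only [hg, Fintype.sum_prod_type]
        ring

lemma pi_prod {q : ℕ} {κ : Fin q → Type*} [∀ k, Fintype (κ k)] {K : ∀ k, (ι → κ k) → ℝ}
    {c : Fin q → ℝ} (hK : ∀ k, HasL2Bound (K k) (c k)) (hK₀ : ∀ k, 0 ≤ K k) (hc : ∀ k, 0 ≤ c k) :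
    HasL2Bound (fun x : ι → ∀ k, κ k => ∏ k, K k fun i => x i k) (∏ k, c k) := by
  induction q with
  | zero =>
    intro f hf
    simp [Real.sqrt_sq (hf _ _)]
  | succ q ih =>
    have h := ((hK 0).prod_mul (hK₀ 0) (ih (fun k => hK k.succ) (fun k => hK₀ k.succ)
      fun k => hc k.succ) (Finset.prod_nonneg fun k _ => hc k.succ)).comp_equiv
      (Fin.consEquiv κ).symm
    simpa only [Fin.prod_univ_succ, Function.comp_def, Fin.consEquiv_symm_apply,
      Fin.tail] using h

end HasL2Bound

/-- The number of perfect matchings of the four positions along which `x` is constant. -/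
def pairingCount {α : Type*} [DecidableEq α] (x : Fin 4 → α) : ℝ :=
  (if x 0 = x 1 ∧ x 2 = x 3 then 1 else 0) + (if x 0 = x 2 ∧ x 1 = x 3 then 1 else 0) +
    (if x 0 = x 3 ∧ x 2 = x 1 then 1 else 0)

variable {α : Type*} [DecidableEq α]

lemma pairingCount_nonneg (x : Fin 4 → α) : 0 ≤ pairingCount x := by
  unfold pairingCount
  positivity

lemma one_le_pairingCount {x : Fin 4 → α} (hx : ∀ p, Even (Finset.card {r | x r = x p})) :
    1 ≤ pairingCount x := by
  simp only [Finset.card_filter, Fin.sum_univ_four, Fin.forall_fin_succ] at hx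
  unfold pairingCount
  by_cases h₀₁ : x 0 = x 1 <;> by_cases h₀₂ : x 0 = x 2 <;> by_cases h₀₃ : x 0 = x 3 <;>
    by_cases h₂₃ : x 2 = x 3 <;> by_cases h₁₃ : x 1 = x 3 <;> by_cases h₁₂ : x 1 = x 2 <;>
    simp_all [eq_comm]

lemma hasL2Bound_pairing [Fintype α] :
    HasL2Bound (fun x : Fin 4 → α => if x 0 = x 1 ∧ x 2 = x 3 then 1 else 0) 1 := by
  intro f hf
  have hsum : ∑ x : Fin 4 → α, (if x 0 = x 1 ∧ x 2 = x 3 then 1 else 0) * ∏ i, f i (x i) =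
      (∑ a, f 0 a * f 1 a) * ∑ b, f 2 b * f 3 b := by
    simp only [ite_mul, one_mul, zero_mul, ← Finset.sum_filter, Fintype.sum_mul_sum,
      ← Fintype.sum_prod_type']
    refine Finset.sum_nbij' (fun x => (x 0, x 2)) (fun p => ![p.1, p.1, p.2, p.2]) ?_ ?_ ?_ ?_ ?_
    · simp
    · simp
    · intro x hx
      rw [Finset.mem_filter] at hx
      ext i
      fin_cases i <;> simp [hx.2]
    · simp
    · intro x hx
      rw [Finset.mem_filter] at hx
      simp [Fin.prod_univ_four, hx.2, mul_assoc]
  rw [hsum, one_mul, Fin.prod_univ_four, mul_assoc (√_ * √_)]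
  refine mul_le_mul (Real.sum_mul_le_sqrt_mul_sqrt _ _ _) (Real.sum_mul_le_sqrt_mul_sqrt _ _ _)
    ?_ (by positivity)
  exact Finset.sum_nonneg fun b _ => mul_nonneg (hf 2 b) (hf 3 b)

lemma hasL2Bound_pairingCount [Fintype α] : HasL2Bound (pairingCount (α := α)) 3 := by
  rw [← two_add_one_eq_three, ← one_add_one_eq_two]
  exact (hasL2Bound_pairing.add (hasL2Bound_pairing.comp_perm (Equiv.swap 1 2))).add
    (hasL2Bound_pairing.comp_perm (Equiv.swap 1 3))

lemma hasL2Bound_prod_pairingCount {q : ℕ} {κ : Fin q → Type*} [∀ k, Fintype (κ k)]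
    [∀ k, DecidableEq (κ k)] :
    HasL2Bound (fun x : Fin 4 → ∀ k, κ k => ∏ k, pairingCount fun p => x p k) (3 ^ q) := by
  simpa using HasL2Bound.pi_prod (fun k => hasL2Bound_pairingCount (α := κ k))
    (fun _ => pairingCount_nonneg) fun _ => by norm_num

end L2Kernels

section Probability

open ProbabilityTheory

variable {Ω : Type*} [MeasurableSpace Ω] {μ : Measure Ω}

lemma nullMeasurableSet_of_measure_add_measure_compl_le [IsFiniteMeasure μ] {A : Set Ω}
    (h : μ A + μ Aᶜ ≤ μ Set.univ) : NullMeasurableSet A μ := by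
  have hsub : (toMeasurable μ Aᶜ)ᶜ ⊆ A :=
    Set.compl_subset_comm.1 (subset_toMeasurable μ Aᶜ)
  have hmeas : MeasurableSet (toMeasurable μ Aᶜ)ᶜ := (measurableSet_toMeasurable _ _).compl
  have hle : μ A ≤ μ (toMeasurable μ Aᶜ)ᶜ := by
    rw [measure_compl (measurableSet_toMeasurable _ _) (measure_ne_top _ _), measure_toMeasurable]
    exact ENNReal.le_sub_of_add_le_right (measure_ne_top _ _) h
  exact hmeas.nullMeasurableSet.congr
    (ae_eq_of_subset_of_measure_ge hsub hle hmeas.nullMeasurableSet (measure_ne_top _ _))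

lemma aemeasurable_of_sum_measure_fiber_le [IsFiniteMeasure μ] {β : Type*} [MeasurableSpace β]
    [MeasurableSpace.CountablyGenerated β] {X : Ω → β} {T : Finset β} (hX : ∀ ω, X ω ∈ T)
    (h : ∑ t ∈ T, μ {ω | X ω = t} ≤ μ Set.univ) : AEMeasurable X μ := by
  classical
  have hpre (s : Set β) [DecidablePred (· ∈ s)] :
      μ (X ⁻¹' s) ≤ ∑ t ∈ T with t ∈ s, μ {ω | X ω = t} := by
    refine (measure_mono fun ω hω => ?_).trans (measure_biUnion_finset_le _ _)
    exact Set.mem_biUnion (Finset.mem_coe.2 (Finset.mem_filter.2 ⟨hX ω, hω⟩)) rfl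
  refine NullMeasurable.aemeasurable fun s _ =>
    nullMeasurableSet_of_measure_add_measure_compl_le ?_
  calc μ (X ⁻¹' s) + μ (X ⁻¹' sᶜ)
      ≤ ∑ t ∈ T with t ∈ s, μ {ω | X ω = t} + ∑ t ∈ T with t ∈ sᶜ, μ {ω | X ω = t} :=
        add_le_add (hpre s) (hpre sᶜ)
    _ = ∑ t ∈ T, μ {ω | X ω = t} := Finset.sum_filter_add_sum_filter_not T (· ∈ s) _
    _ ≤ μ Set.univ := h

section Independence

variable [IsProbabilityMeasure μ] {κ κ' : Type*} [Fintype κ] [Fintype κ'] {β : κ → Type*}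
  {γ : κ' → Type*} [∀ k, MeasurableSpace (β k)] [∀ k, MeasurableSingletonClass (β k)]
  [∀ k, MeasurableSpace (γ k)] [∀ k, MeasurableSingletonClass (γ k)]
  {X : ∀ k, Ω → β k} {Y : ∀ k, Ω → γ k}

lemma iIndepFun_and_indepFun_of_countable [∀ k, Countable (β k)] [∀ k, Countable (γ k)]
    (hX : ∀ k, AEMeasurable (X k) μ) (hY : ∀ k, AEMeasurable (Y k) μ)
    (h : ∀ (x : ∀ k, β k) (y : ∀ k, γ k), μ {ω | (∀ k, X k ω = x k) ∧ ∀ k, Y k ω = y k} =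
      (∏ k, μ {ω | X k ω = x k}) * ∏ k, μ {ω | Y k ω = y k}) :
    iIndepFun X μ ∧ iIndepFun Y μ ∧
      IndepFun (fun ω k => X k ω) (fun ω k => Y k ω) μ := by
  have hXpi : AEMeasurable (fun ω k => X k ω) μ := aemeasurable_pi_iff.2 hX
  have hYpi : AEMeasurable (fun ω k => Y k ω) μ := aemeasurable_pi_iff.2 hY
  have (k : κ) : IsProbabilityMeasure (μ.map (X k)) := Measure.isProbabilityMeasure_map (hX k)
  have (k : κ') : IsProbabilityMeasure (μ.map (Y k)) := Measure.isProbabilityMeasure_map (hY k)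
  have hlaw : μ.map (fun ω => ((fun k => X k ω), fun k => Y k ω)) =
      (Measure.pi fun k => μ.map (X k)).prod (Measure.pi fun k => μ.map (Y k)) := by
    refine Measure.ext_of_singleton fun ⟨x, y⟩ => ?_
    rw [Measure.map_apply_of_aemeasurable (hXpi.prodMk hYpi) (measurableSet_singleton _),
      ← Set.singleton_prod_singleton, Measure.prod_prod, Measure.pi_singleton,
      Measure.pi_singleton]
    simp only [Measure.map_apply_of_aemeasurable (hX _) (measurableSet_singleton _),
      Measure.map_apply_of_aemeasurable (hY _) (measurableSet_singleton _)]
    rw [Set.singleton_prod_singleton]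
    simpa only [Set.preimage, Set.mem_singleton_iff, Prod.mk.injEq, funext_iff] using h x y
  have hfst := congrArg (Measure.map Prod.fst) hlaw
  have hsnd := congrArg (Measure.map Prod.snd) hlaw
  rw [AEMeasurable.map_map_of_aemeasurable measurable_fst.aemeasurable (hXpi.prodMk hYpi),
    Measure.map_fst_prod, measure_univ, one_smul] at hfst
  rw [AEMeasurable.map_map_of_aemeasurable measurable_snd.aemeasurable (hXpi.prodMk hYpi),
    Measure.map_snd_prod, measure_univ, one_smul] at hsnd
  refine ⟨(iIndepFun_iff_map_fun_eq_pi_map hX).2 hfst, (iIndepFun_iff_map_fun_eq_pi_map hY).2 hsnd,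
    (indepFun_iff_map_prod_eq_prod_map_map hXpi hYpi).2 ?_⟩
  rw [hlaw]
  exact congrArg₂ Measure.prod hfst.symm hsnd.symm

lemma iIndepFun_and_indepFun_of_countable_range
    (hX : ∀ k, AEMeasurable (X k) μ) (hY : ∀ k, AEMeasurable (Y k) μ)
    (hXc : ∀ k, (Set.range (X k)).Countable) (hYc : ∀ k, (Set.range (Y k)).Countable)
    (h : ∀ (x : ∀ k, β k) (y : ∀ k, γ k), μ {ω | (∀ k, X k ω = x k) ∧ ∀ k, Y k ω = y k} =
      (∏ k, μ {ω | X k ω = x k}) * ∏ k, μ {ω | Y k ω = y k}) :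
    iIndepFun X μ ∧ iIndepFun Y μ ∧
      IndepFun (fun ω k => X k ω) (fun ω k => Y k ω) μ := by
  have (k : κ) : Countable (Set.range (X k)) := hXc k
  have (k : κ') : Countable (Set.range (Y k)) := hYc k
  obtain ⟨hXi, hYi, hXY⟩ := iIndepFun_and_indepFun_of_countable (μ := μ)
    (X := fun k => Set.rangeFactorization (X k)) (Y := fun k => Set.rangeFactorization (Y k))
    (fun k => (hX k).subtype_mk) (fun k => (hY k).subtype_mk)
    (fun x y => by
      simpa only [Set.rangeFactorization, Subtype.ext_iff] using h (fun k => x k) fun k => y k)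
  refine ⟨hXi.comp (fun _ => Subtype.val) fun _ => measurable_subtype_coe,
    hYi.comp (fun _ => Subtype.val) fun _ => measurable_subtype_coe,
    hXY.comp (φ := fun (x : ∀ k, Set.range (X k)) k => (x k : β k))
      (ψ := fun (y : ∀ k, Set.range (Y k)) k => (y k : γ k)) ?_ ?_⟩
  all_goals fun_prop

lemma iIndepFun_of_measure_fiber_eq_prod (hX : ∀ k, AEMeasurable (X k) μ)
    (hXc : ∀ k, (Set.range (X k)).Countable)
    (h : ∀ x : ∀ k, β k, μ {ω | ∀ k, X k ω = x k} = ∏ k, μ {ω | X k ω = x k}) :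
    iIndepFun X μ :=
  (iIndepFun_and_indepFun_of_countable_range (Y := fun (_ : Empty) (_ : Ω) => ()) hX
    (fun k => k.elim) hXc (fun k => k.elim) (by simpa using h)).1

end Independence

lemma measure_setOf_mem_le_of_indepFun [IsProbabilityMeasure μ] {β γ : Type*} [MeasurableSpace β]
    [MeasurableSpace γ] {X : Ω → β} {Y : Ω → γ} (hXY : IndepFun X Y μ) (hX : AEMeasurable X μ)
    (hY : AEMeasurable Y μ) {E : Set (β × γ)} (hE : MeasurableSet E) {c : ENNReal}
    (h : ∀ y, μ {ω | (X ω, y) ∈ E} ≤ c) : μ {ω | (X ω, Y ω) ∈ E} ≤ c := by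
  have := Measure.isProbabilityMeasure_map (μ := μ) hY
  calc μ {ω | (X ω, Y ω) ∈ E}
      = ((μ.map X).prod (μ.map Y)) E := by
        rw [← (indepFun_iff_map_prod_eq_prod_map_map hX hY).1 hXY,
          Measure.map_apply_of_aemeasurable (hX.prodMk hY) hE]
        rfl
    _ = ∫⁻ y, μ {ω | (X ω, y) ∈ E} ∂(μ.map Y) := by
        rw [Measure.prod_apply_symm hE]
        refine lintegral_congr fun y => ?_
        rw [Measure.map_apply_of_aemeasurable hX (measurable_prodMk_right hE)]
        rfl
    _ ≤ ∫⁻ _, c ∂(μ.map Y) := lintegral_mono h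
    _ = c := by simp

lemma measureReal_lt_le_of_integral_le_mul {f : Ω → ℝ} (hf₀ : 0 ≤ f)
    (hf : Integrable f μ) {t δ : ℝ} (ht : 0 ≤ t) (hδ : 0 ≤ δ) (h : ∫ ω, f ω ∂μ ≤ δ * t) :
    μ.real {ω | t < f ω} ≤ δ := by
  rcases ht.eq_or_lt with rfl | ht
  · have hzero : ∫ ω, f ω ∂μ = 0 := le_antisymm (by simpa using h) (integral_nonneg hf₀)
    have hae := (integral_eq_zero_iff_of_nonneg hf₀ hf).1 hzero
    have hnull : μ {ω | 0 < f ω} = 0 := measure_mono_null (fun _ hω => ne_of_gt hω) hae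
    simpa [Measure.real, hnull] using hδ
  · have hmarkov := mul_meas_ge_le_integral_of_nonneg (.of_forall hf₀) hf t
    have hmono : μ.real {ω | t < f ω} ≤ μ.real {ω | t ≤ f ω} :=
      measureReal_mono (fun ω (hω : t < f ω) => hω.le) (hf.measure_ge_lt_top ht).ne
    nlinarith

lemma one_sub_add_le_measureReal_of_compl_subset_union [IsProbabilityMeasure μ]
    {A B₁ B₂ : Set Ω} {δ₁ δ₂ : ℝ} (hsub : Aᶜ ⊆ B₁ ∪ B₂) (h₁ : μ.real B₁ ≤ δ₁)
    (h₂ : μ.real B₂ ≤ δ₂) :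
    1 - (δ₁ + δ₂) ≤ μ.real A := by
  have huniv : μ.real Set.univ ≤ μ.real A + μ.real Aᶜ :=
    Set.union_compl_self A ▸ measureReal_union_le A Aᶜ
  rw [probReal_univ] at huniv
  linarith [(measureReal_mono hsub).trans (measureReal_union_le (μ := μ) B₁ B₂)]

end Probability

section Hashing

open ProbabilityTheory

variable {Ω : Type*} [MeasurableSpace Ω] {μ : Measure Ω}

namespace KWiseIndepHash

variable {ι : Type*} {m k : ℕ} {h : Ω → ι → Fin m}

lemma mono {l : ℕ} (hh : KWiseIndepHash μ k h) (hlk : l ≤ k) : KWiseIndepHash μ l h :=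
  ⟨hh.1, fun t ht => hh.2 t (ht.trans hlk)⟩

lemma aemeasurable [Countable ι] [NeZero m] [IsProbabilityMeasure μ] (hh : KWiseIndepHash μ k h) :
    AEMeasurable h μ := by
  refine aemeasurable_pi_iff.2 fun i =>
    aemeasurable_of_sum_measure_fiber_le (fun _ => Finset.mem_univ _) ?_
  simp [hh.1, ENNReal.mul_inv_cancel (NeZero.ne (m : ENNReal)) (ENNReal.natCast_ne_top m)]

lemma measure_eq_comp_le [NeZero m] (hh : KWiseIndepHash μ 2 h) {i j : ι} (hij : i ≠ j)
    (φ : Fin m → Fin m) : μ {ω | h ω i = φ (h ω j)} ≤ 1 / m := by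
  classical
  have hpair (b : Fin m) : μ {ω | h ω i = φ b ∧ h ω j = b} = 1 / m * (1 / m) := by
    have hb := hh.2 {i, j} Finset.card_le_two (Function.update (fun _ => b) i (φ b))
    rw [Finset.prod_pair hij] at hb
    simpa [hij.symm, hh.1] using hb
  calc μ {ω | h ω i = φ (h ω j)}
      ≤ ∑ b : Fin m, μ {ω | h ω i = φ b ∧ h ω j = b} := by
        refine (measure_mono fun ω hω => ?_).trans (measure_iUnion_fintype_le _ _)
        exact Set.mem_iUnion.2 ⟨h ω j, hω, rfl⟩
    _ = 1 / m := by
        simp only [hpair, Finset.sum_const, Finset.card_univ, Fintype.card_fin, nsmul_eq_mul]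
        rw [← mul_assoc, ENNReal.mul_div_cancel (NeZero.ne _) (ENNReal.natCast_ne_top m), one_mul]

end KWiseIndepHash

open scoped Fin.NatCast Fin.CommRing in
lemma hashFam_eq_sum {m q : ℕ} [NeZero m] {n : Fin q → ℕ} (h : ∀ k, Fin (n k) → Fin m)
    (i : ∀ k, Fin (n k)) : hashFam h i = ∑ k, h k (i k) :=
  calc hashFam h i = ((∑ k, (h k (i k) : ℕ) : ℕ) : Fin m) := rfl
    _ = ∑ k, h k (i k) := by simp

-- Conditioning on all hash maps but one reduces a collision to one equation for the remaining map.
lemma measure_hashFam_eq_le [IsProbabilityMeasure μ] {q m : ℕ} [NeZero m] {n : Fin q → ℕ}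
    {H : ∀ k, Ω → Fin (n k) → Fin m} (hH : ∀ k, KWiseIndepHash μ 2 (H k)) (hind : iIndepFun H μ)
    {i j : ∀ k, Fin (n k)} (hij : i ≠ j) :
    μ {ω | hashFam (fun k => H k ω) i = hashFam (fun k => H k ω) j} ≤ 1 / m := by
  obtain ⟨k₀, hk₀⟩ := Function.ne_iff.1 hij
  have hmeas k := (hH k).aemeasurable
  let R (a : ∀ k, Fin (n k)) (y : ∀ k : (Finset.univ.erase k₀ : Finset (Fin q)),
    Fin (n k) → Fin m) : Fin m := ∑ k : (Finset.univ.erase k₀ : Finset (Fin q)), y k (a k)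
  have hsplit (ω : Ω) (a : ∀ k, Fin (n k)) :
      hashFam (fun k => H k ω) a = H k₀ ω (a k₀) + R a fun k => H k ω := by
    rw [hashFam_eq_sum, ← Finset.add_sum_erase _ _ (Finset.mem_univ k₀)]
    congr 1
    exact (Finset.sum_coe_sort (Finset.univ.erase k₀) fun k => H k ω (a k)).symm
  have hindep : IndepFun (H k₀) (fun ω (k : (Finset.univ.erase k₀ : Finset (Fin q))) => H k ω) μ :=
    (hind.indepFun_finset₀ {k₀} (Finset.univ.erase k₀) (by simp) hmeas).comp
      (φ := fun x : ∀ k : ({k₀} : Finset (Fin q)), Fin (n k) → Fin m =>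
        x ⟨k₀, Finset.mem_singleton_self k₀⟩) (measurable_pi_apply _) measurable_id
  simp only [hsplit]
  refine measure_setOf_mem_le_of_indepFun
    (E := {p | p.1 (i k₀) + R i p.2 = p.1 (j k₀) + R j p.2}) hindep (hmeas k₀)
    (aemeasurable_pi_iff.2 fun k => hmeas k) (Set.toFinite _).measurableSet fun y => ?_
  refine le_of_eq_of_le (congrArg μ (Set.ext fun ω => ?_))
    ((hH k₀).measure_eq_comp_le hk₀ fun b => b + R j y - R i y)
  exact eq_sub_iff_add_eq.symm

namespace KWiseIndepSign

variable {ι : Type*} {k : ℕ} {v : Ω → ι → ℝ}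

lemma sq_eq_one (hv : KWiseIndepSign μ k v) (ω : Ω) (i : ι) : v ω i ^ 2 = 1 :=
  sq_eq_one_iff.2 (hv.1 ω i)

lemma aemeasurable [IsProbabilityMeasure μ] (hv : KWiseIndepSign μ k v) (i : ι) :
    AEMeasurable (fun ω => v ω i) μ := by
  refine aemeasurable_of_sum_measure_fiber_le (T := {1, -1}) (by simpa using fun ω => hv.1 ω i) ?_
  rw [Finset.sum_pair (by norm_num), hv.2.1 i 1 (.inl rfl), hv.2.1 i (-1) (.inr rfl)]
  simp [ENNReal.inv_two_add_inv_two]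

lemma finite_range [Finite ι] (hv : KWiseIndepSign μ k v) : (Set.range v).Finite := by
  refine (Set.Finite.pi' (t := fun _ => {1, -1}) fun _ => Set.toFinite _).subset ?_
  rintro _ ⟨ω, rfl⟩
  exact fun i => hv.1 ω i

lemma integral_eq_zero [IsProbabilityMeasure μ] (hv : KWiseIndepSign μ k v) (i : ι) :
    ∫ ω, v ω i ∂μ = 0 := by
  have hA : NullMeasurableSet {ω | v ω i = 1} μ :=
    (hv.aemeasurable i).nullMeasurable (measurableSet_singleton 1)
  have hv_eq : (fun ω => v ω i) = fun ω => {ω | v ω i = 1}.indicator (fun _ => (2 : ℝ)) ω - 1 := by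
    ext ω
    rcases hv.1 ω i with h | h <;> norm_num [h, Set.indicator]
  rw [hv_eq, integral_sub ((integrable_const 2).indicator₀ hA) (integrable_const 1),
    integral_indicator₀ hA, setIntegral_const, Measure.real, hv.2.1 i 1 (.inl rfl)]
  simp

lemma iIndepFun_coe [IsProbabilityMeasure μ] (hv : KWiseIndepSign μ k v)
    {t : Finset ι} (ht : t.card ≤ k) : iIndepFun (fun (i : t) ω => v ω i) μ := by
  refine iIndepFun_of_measure_fiber_eq_prod (fun i => hv.aemeasurable i)
    (fun i => ?_) fun x => ?_
  · refine ((Set.toFinite {1, -1}).subset ?_).countable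
    rintro _ ⟨ω, rfl⟩
    exact hv.1 ω i
  · have h := hv.2.2 t ht (Function.extend Subtype.val x 0)
    rw [← Finset.prod_coe_sort] at h
    simpa only [Subtype.forall', Subtype.val_injective.extend_apply] using h

lemma integral_prod_eq_zero [IsProbabilityMeasure μ] (hv : KWiseIndepSign μ k v) {t : Finset ι}
    (ht : t.card ≤ k) (hne : t.Nonempty) : ∫ ω, ∏ i ∈ t, v ω i ∂μ = 0 := by
  have h := (hv.iIndepFun_coe ht).integral_fun_prod_comp (f := fun _ x => x)
    (fun i => hv.aemeasurable i) fun _ => aestronglyMeasurable_id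
  simp only [hv.integral_eq_zero] at h
  simp only [← Finset.prod_coe_sort t]
  rw [h, Finset.prod_const, zero_pow]
  simpa using hne.ne_empty

lemma prod_comp_eq_prod_odd {α : Type*} [DecidableEq ι] [Fintype α]
    (hv : KWiseIndepSign μ k v) (x : α → ι) (ω : Ω) :
    ∏ p, v ω (x p) = ∏ b ∈ Finset.univ.image x with Odd (Finset.card {p | x p = b}), v ω b := by
  rw [Finset.prod_comp (v ω) x, Finset.prod_filter]
  refine Finset.prod_congr rfl fun b _ => ?_
  split_ifs with hodd
  · rw [← Nat.two_mul_div_two_add_one_of_odd hodd, pow_succ, pow_mul, hv.sq_eq_one, one_pow,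
      one_mul]
  · rw [← Nat.two_mul_div_two_of_even (Nat.not_odd_iff_even.1 hodd), pow_mul, hv.sq_eq_one,
      one_pow]

lemma abs_integral_prod_le_pairingCount [DecidableEq ι] [IsProbabilityMeasure μ]
    (hv : KWiseIndepSign μ 4 v) (x : Fin 4 → ι) :
    |∫ ω, ∏ p, v ω (x p) ∂μ| ≤ pairingCount x := by
  simp only [hv.prod_comp_eq_prod_odd]
  set t := {b ∈ Finset.univ.image x | Odd (Finset.card {p | x p = b})}
  have hcard : t.card ≤ 4 :=
    (Finset.card_filter_le _ _).trans
      (by simpa using Finset.card_image_le (s := Finset.univ) (f := x))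
  rcases t.eq_empty_or_nonempty with hempty | hne
  · have heven (p : Fin 4) : Even (Finset.card {r | x r = x p}) :=
      Nat.not_odd_iff_even.1
        (Finset.filter_eq_empty_iff.1 hempty (Finset.mem_image_of_mem x (Finset.mem_univ p)))
    simpa [hempty] using one_le_pairingCount heven
  · rw [hv.integral_prod_eq_zero hcard hne, abs_zero]
    exact pairingCount_nonneg x

end KWiseIndepSign

end Hashing

section SecondMoment

variable {Ω : Type*} [MeasurableSpace Ω] {μ : Measure Ω} {ι α β : Type*} [Fintype ι] [Fintype α]
  [Fintype β]

lemma sq_sum_sum_eq_sum_fin_four (F : ι → ι → ℝ) :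
    (∑ i, ∑ j, F i j) ^ 2 = ∑ x : Fin 4 → ι, F (x 0) (x 1) * F (x 2) (x 3) := by
  simp only [← Fintype.sum_prod_type', sq, Fintype.sum_mul_sum]
  refine Finset.sum_nbij' (fun p => ![p.1.1, p.1.2, p.2.1, p.2.2])
    (fun x => ((x 0, x 1), (x 2, x 3))) ?_ ?_ ?_ ?_ ?_
  · simp
  · simp
  · simp
  · intro x _
    ext i
    fin_cases i <;> rfl
  · simp

lemma frobSq_transpose_mul_mul (A : Matrix ι α ℝ) (M : Matrix ι ι ℝ) (B : Matrix ι β ℝ) :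
    frobSq (Aᵀ * M * B) = ∑ a, ∑ b, ∑ x : Fin 4 → ι,
      M (x 0) (x 1) * M (x 2) (x 3) * (A (x 0) a * B (x 1) b * A (x 2) a * B (x 3) b) := by
  have hentry (a : α) (b : β) : (Aᵀ * M * B) a b = ∑ i, ∑ j, A i a * M i j * B j b := by
    simp only [mul_apply, transpose_apply, Finset.sum_mul]
    exact Finset.sum_comm
  simp only [frobSq, hentry, sq_sum_sum_eq_sum_fin_four]
  congr! 3 with a _ b _ x
  ring

lemma integrable_frobSq_transpose_mul_mul {M : Ω → Matrix ι ι ℝ}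
    (hint : ∀ x : Fin 4 → ι, Integrable (fun ω => M ω (x 0) (x 1) * M ω (x 2) (x 3)) μ)
    (A : Matrix ι α ℝ) (B : Matrix ι β ℝ) : Integrable (fun ω => frobSq (Aᵀ * M ω * B)) μ := by
  simp only [frobSq_transpose_mul_mul]
  exact integrable_finsetSum _ fun a _ => integrable_finsetSum _ fun b _ =>
    integrable_finsetSum _ fun x _ => (hint x).mul_const _

lemma integral_frobSq_transpose_mul_mul {M : Ω → Matrix ι ι ℝ}
    (hint : ∀ x : Fin 4 → ι, Integrable (fun ω => M ω (x 0) (x 1) * M ω (x 2) (x 3)) μ)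
    (A : Matrix ι α ℝ) (B : Matrix ι β ℝ) :
    ∫ ω, frobSq (Aᵀ * M ω * B) ∂μ = ∑ a, ∑ b, ∑ x : Fin 4 → ι,
      (∫ ω, M ω (x 0) (x 1) * M ω (x 2) (x 3) ∂μ) *
        (A (x 0) a * B (x 1) b * A (x 2) a * B (x 3) b) := by
  simp only [frobSq_transpose_mul_mul]
  have hterm a b x := (hint x).mul_const (A (x 0) a * B (x 1) b * A (x 2) a * B (x 3) b)
  have hsum a b := integrable_finsetSum Finset.univ fun x _ => hterm a b x
  rw [integral_finsetSum _ fun a _ => integrable_finsetSum _ fun b _ => hsum a b]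
  refine Finset.sum_congr rfl fun a _ => ?_
  rw [integral_finsetSum _ fun b _ => hsum a b]
  refine Finset.sum_congr rfl fun b _ => ?_
  rw [integral_finsetSum _ fun x _ => hterm a b x]
  simp only [integral_mul_const]

lemma HasL2Bound.sum_mul_le {K : (Fin 4 → ι) → ℝ} {c : ℝ} (hK : HasL2Bound K c)
    {L : (Fin 4 → ι) → ℝ} (hL : ∀ x, |L x| ≤ K x) (u w : ι → ℝ) :
    ∑ x : Fin 4 → ι, L x * (u (x 0) * w (x 1) * u (x 2) * w (x 3)) ≤
      c * ((∑ i, u i ^ 2) * ∑ j, w j ^ 2) := by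
  let f : Fin 4 → ι → ℝ := ![|u|, |w|, |u|, |w|]
  have hf : 0 ≤ f := by
    intro p i
    fin_cases p <;> exact abs_nonneg _
  have habs (x : Fin 4 → ι) : |u (x 0) * w (x 1) * u (x 2) * w (x 3)| = ∏ p, f p (x p) := by
    simp [f, Fin.prod_univ_four, abs_mul]
  calc ∑ x : Fin 4 → ι, L x * (u (x 0) * w (x 1) * u (x 2) * w (x 3))
      ≤ ∑ x, K x * ∏ p, f p (x p) := by
        refine Finset.sum_le_sum fun x _ => (le_abs_self _).trans ?_
        rw [abs_mul, habs]
        exact mul_le_mul_of_nonneg_right (hL x) (Finset.prod_nonneg fun p _ => hf p (x p))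
    _ ≤ c * ∏ p, √(∑ i, f p i ^ 2) := hK f hf
    _ = c * (√(∑ i, u i ^ 2) ^ 2 * √(∑ j, w j ^ 2) ^ 2) := by
        simp only [Fin.prod_univ_four, f, Matrix.cons_val, Pi.abs_apply, sq_abs]
        ring
    _ = c * ((∑ i, u i ^ 2) * ∑ j, w j ^ 2) := by
        rw [Real.sq_sqrt (by positivity), Real.sq_sqrt (by positivity)]

lemma integral_frobSq_transpose_mul_mul_le {M : Ω → Matrix ι ι ℝ}
    {K : (Fin 4 → ι) → ℝ} {c : ℝ} (hK : HasL2Bound K c)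
    (hint : ∀ x : Fin 4 → ι, Integrable (fun ω => M ω (x 0) (x 1) * M ω (x 2) (x 3)) μ)
    (hM : ∀ x : Fin 4 → ι, |∫ ω, M ω (x 0) (x 1) * M ω (x 2) (x 3) ∂μ| ≤ K x)
    (A : Matrix ι α ℝ) (B : Matrix ι β ℝ) :
    ∫ ω, frobSq (Aᵀ * M ω * B) ∂μ ≤ c * (frobSq A * frobSq B) := by
  have hA : frobSq A = ∑ a, ∑ i, A i a ^ 2 := Finset.sum_comm
  have hB : frobSq B = ∑ b, ∑ j, B j b ^ 2 := Finset.sum_comm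
  rw [integral_frobSq_transpose_mul_mul hint, hA, hB, Fintype.sum_mul_sum, Finset.mul_sum]
  refine Finset.sum_le_sum fun a _ => ?_
  rw [Finset.mul_sum]
  exact Finset.sum_le_sum fun b _ => hK.sum_mul_le hM (fun i => A i a) fun j => B j b

end SecondMoment

section TensorSketch

open ProbabilityTheory

lemma gramError_countSketch_apply {ι : Type*} [DecidableEq ι] {m : ℕ} (h : ι → Fin m)
    {v : ι → ℝ} (hv : ∀ i, v i ^ 2 = 1) (i j : ι) :
    gramError (countSketch h v) i j =
      if i ≠ j ∧ h i = h j then v i * v j else 0 := by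
  rcases eq_or_ne i j with rfl | hij
  · simp [gramError, countSketch, mul_apply, ← sq, hv]
  · simp [gramError, countSketch, mul_apply, hij, eq_comm]

variable {Ω : Type*} [MeasurableSpace Ω] {μ : Measure Ω} [IsProbabilityMeasure μ] {q m : ℕ}
  [NeZero m] {n : Fin q → ℕ} {H : ∀ k, Ω → Fin (n k) → Fin m} {V : ∀ k, Ω → Fin (n k) → ℝ}

/-- The families of hash maps for which the `(x 0, x 1)` and `(x 2, x 3)` entries of the sketched
Gram matrix are both off-diagonal and nonzero. -/
def doubleCollisions (m : ℕ) [NeZero m] (x : Fin 4 → ∀ k, Fin (n k)) :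
    Set (∀ k, Fin (n k) → Fin m) :=
  {h | (x 0 ≠ x 1 ∧ hashFam h (x 0) = hashFam h (x 1)) ∧
    x 2 ≠ x 3 ∧ hashFam h (x 2) = hashFam h (x 3)}

lemma gramError_tsMat_mul (h : ∀ k, Fin (n k) → Fin m) {v : ∀ k, Fin (n k) → ℝ}
    (hv : ∀ k i, v k i ^ 2 = 1) (x : Fin 4 → ∀ k, Fin (n k)) :
    gramError (tsMat h v) (x 0) (x 1) *
      gramError (tsMat h v) (x 2) (x 3) =
      (doubleCollisions m x).indicator (fun _ => (1 : ℝ)) h * ∏ k, ∏ p, v k (x p k) := by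
  classical
  have hsq (i : ∀ k, Fin (n k)) : (∏ k, v k (i k)) ^ 2 = 1 := by
    simp [← Finset.prod_pow, hv]
  simp only [tsMat, gramError_countSketch_apply _ hsq, Fin.prod_univ_four, Finset.prod_mul_distrib]
  by_cases h₀₁ : x 0 ≠ x 1 ∧ hashFam h (x 0) = hashFam h (x 1)
  · by_cases h₂₃ : x 2 ≠ x 3 ∧ hashFam h (x 2) = hashFam h (x 3)
    · rw [if_pos h₀₁, if_pos h₂₃, Set.indicator_of_mem (show h ∈ doubleCollisions m x from
        ⟨h₀₁, h₂₃⟩), one_mul, mul_assoc (_ * _)]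
    · rw [if_neg h₂₃, mul_zero, Set.indicator_of_notMem fun h => h₂₃ h.2, zero_mul]
  · rw [if_neg h₀₁, zero_mul, Set.indicator_of_notMem fun h => h₀₁ h.1, zero_mul]

lemma IndepHashSigns.iIndepFun_and_indepFun (hHV : IndepHashSigns μ H V)
    (hH : ∀ k, KWiseIndepHash μ 2 (H k)) (hV : ∀ k, KWiseIndepSign μ 4 (V k)) :
    iIndepFun H μ ∧ iIndepFun V μ ∧ IndepFun (fun ω k => H k ω) (fun ω k => V k ω) μ :=
  iIndepFun_and_indepFun_of_countable_range (fun k => (hH k).aemeasurable)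
    (fun k => aemeasurable_pi_iff.2 (hV k).aemeasurable) (fun _ => Set.to_countable _)
    (fun k => (hV k).finite_range.countable) hHV

lemma integral_indicator_doubleCollisions_le (hH : ∀ k, KWiseIndepHash μ 2 (H k))
    (hind : iIndepFun H μ) (x : Fin 4 → ∀ k, Fin (n k)) :
    ∫ ω, (doubleCollisions m x).indicator (fun _ => (1 : ℝ)) (fun k => H k ω) ∂μ ≤ 1 / m := by
  have hmeas : NullMeasurableSet ((fun ω k => H k ω) ⁻¹' doubleCollisions m x) μ :=
    (aemeasurable_pi_iff.2 fun k => (hH k).aemeasurable).nullMeasurable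
      (Set.toFinite _).measurableSet
  have hle : μ ((fun ω k => H k ω) ⁻¹' doubleCollisions m x) ≤ 1 / m := by
    rcases eq_or_ne (x 0) (x 1) with heq | hne
    · simp [doubleCollisions, heq]
    · exact (measure_mono fun ω hω => hω.1.2).trans (measure_hashFam_eq_le hH hind hne)
  calc ∫ ω, (doubleCollisions m x).indicator (fun _ => (1 : ℝ)) (fun k => H k ω) ∂μ
      = μ.real ((fun ω k => H k ω) ⁻¹' doubleCollisions m x) := by
        refine (integral_indicator₀ (f := fun _ => (1 : ℝ)) hmeas).trans ?_
        simp
    _ ≤ (1 / m : ENNReal).toReal := ENNReal.toReal_mono (by simp [NeZero.ne]) hle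
    _ = 1 / m := by simp

lemma abs_integral_prod_prod_le_prod_pairingCount (hV : ∀ k, KWiseIndepSign μ 4 (V k))
    (hind : iIndepFun V μ) (x : Fin 4 → ∀ k, Fin (n k)) :
    |∫ ω, ∏ k, ∏ p, V k ω (x p k) ∂μ| ≤ ∏ k, pairingCount fun p => x p k := by
  rw [hind.integral_fun_prod_comp (f := fun k v => ∏ p, v (x p k))
    (fun k => aemeasurable_pi_iff.2 (hV k).aemeasurable)
    fun k => Measurable.aestronglyMeasurable (by fun_prop), Finset.abs_prod]
  exact Finset.prod_le_prod (fun k _ => abs_nonneg _) fun k _ =>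
    (hV k).abs_integral_prod_le_pairingCount _

lemma aemeasurable_indicator_doubleCollisions (hH : ∀ k, KWiseIndepHash μ 2 (H k))
    (x : Fin 4 → ∀ k, Fin (n k)) : AEMeasurable
      (fun ω => (doubleCollisions m x).indicator (fun _ => (1 : ℝ)) fun k => H k ω) μ :=
  (measurable_one.indicator (Set.toFinite _).measurableSet).comp_aemeasurable
    (aemeasurable_pi_iff.2 fun k => (hH k).aemeasurable)

lemma aemeasurable_prod_prod_sign (hV : ∀ k, KWiseIndepSign μ 4 (V k))
    (x : Fin 4 → ∀ k, Fin (n k)) : AEMeasurable (fun ω => ∏ k, ∏ p, V k ω (x p k)) μ :=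
  Finset.aemeasurable_fun_prod _ fun k _ => Finset.aemeasurable_fun_prod _ fun p _ =>
    (hV k).aemeasurable (x p k)

lemma integrable_gramError_tsMat_mul (hH : ∀ k, KWiseIndepHash μ 2 (H k))
    (hV : ∀ k, KWiseIndepSign μ 4 (V k)) (x : Fin 4 → ∀ k, Fin (n k)) :
    Integrable (fun ω => gramError (tsMat (fun k => H k ω) fun k => V k ω) (x 0) (x 1) *
      gramError (tsMat (fun k => H k ω) fun k => V k ω) (x 2) (x 3)) μ := by
  have habs k ω i : |V k ω i| = 1 := by
    rw [← sq_eq_sq₀ (abs_nonneg _) zero_le_one, sq_abs, one_pow, (hV k).sq_eq_one]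
  have hprod ω : ‖∏ k, ∏ p, V k ω (x p k)‖ = 1 := by
    simp [habs]
  simp only [gramError_tsMat_mul _ fun k i => (hV k).sq_eq_one _ i]
  refine Integrable.of_bound ((aemeasurable_indicator_doubleCollisions hH x).mul
    (aemeasurable_prod_prod_sign hV x)).aestronglyMeasurable 1 (.of_forall fun ω => ?_)
  rw [norm_mul, hprod, mul_one]
  exact (norm_indicator_le_norm_self _ _).trans (by simp)

lemma abs_integral_gramError_tsMat_mul_le (hHV : IndepHashSigns μ H V)
    (hH : ∀ k, KWiseIndepHash μ 2 (H k)) (hV : ∀ k, KWiseIndepSign μ 4 (V k))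
    (x : Fin 4 → ∀ k, Fin (n k)) :
    |∫ ω, gramError (tsMat (fun k => H k ω) fun k => V k ω) (x 0) (x 1) *
      gramError (tsMat (fun k => H k ω) fun k => V k ω) (x 2) (x 3) ∂μ| ≤
      1 / m * ∏ k, pairingCount fun p => x p k := by
  obtain ⟨hHind, hVind, hHVind⟩ := hHV.iIndepFun_and_indepFun hH hV
  simp only [gramError_tsMat_mul _ fun k i => (hV k).sq_eq_one _ i]
  have hindep : IndepFun
      (fun ω => (doubleCollisions m x).indicator (fun _ => (1 : ℝ)) fun k => H k ω)
      (fun ω => ∏ k, ∏ p, V k ω (x p k)) μ :=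
    hHVind.comp (φ := (doubleCollisions m x).indicator fun _ => (1 : ℝ))
      (ψ := fun v : ∀ k, Fin (n k) → ℝ => ∏ k, ∏ p, v k (x p k))
      (measurable_const.indicator (Set.toFinite _).measurableSet) (by fun_prop)
  rw [hindep.integral_fun_mul_eq_mul_integral
    (aemeasurable_indicator_doubleCollisions hH x).aestronglyMeasurable
    (aemeasurable_prod_prod_sign hV x).aestronglyMeasurable, abs_mul, abs_of_nonneg
    (integral_nonneg fun ω => Set.indicator_nonneg (fun _ _ => zero_le_one) _)]
  exact mul_le_mul (integral_indicator_doubleCollisions_le hH hHind x)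
    (abs_integral_prod_prod_le_prod_pairingCount hV hVind x) (abs_nonneg _) (by positivity)

variable {α β : Type*} [Fintype α] [Fintype β]

lemma integrable_frobSq_sketchError_tsMat (hH : ∀ k, KWiseIndepHash μ 2 (H k))
    (hV : ∀ k, KWiseIndepSign μ 4 (V k)) (A : Matrix (∀ k, Fin (n k)) α ℝ)
    (B : Matrix (∀ k, Fin (n k)) β ℝ) :
    Integrable (fun ω => frobSq (sketchError (tsMat (fun k => H k ω) fun k => V k ω) A B)) μ :=
  integrable_frobSq_transpose_mul_mul (integrable_gramError_tsMat_mul hH hV) A B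

lemma integral_frobSq_sketchError_tsMat_le (hHV : IndepHashSigns μ H V)
    (hH : ∀ k, KWiseIndepHash μ 2 (H k)) (hV : ∀ k, KWiseIndepSign μ 4 (V k))
    (A : Matrix (∀ k, Fin (n k)) α ℝ) (B : Matrix (∀ k, Fin (n k)) β ℝ) :
    ∫ ω, frobSq (sketchError (tsMat (fun k => H k ω) fun k => V k ω) A B) ∂μ ≤
      1 / m * 3 ^ q * (frobSq A * frobSq B) :=
  integral_frobSq_transpose_mul_mul_le (hasL2Bound_prod_pairingCount.const_mul (by positivity))
    (integrable_gramError_tsMat_mul hH hV) (abs_integral_gramError_tsMat_mul_le hHV hH hV) A B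

theorem measureReal_lt_frobSq_sketchError_tsMat_le (hHV : IndepHashSigns μ H V)
    (hH : ∀ k, KWiseIndepHash μ 2 (H k)) (hV : ∀ k, KWiseIndepSign μ 4 (V k))
    (A : Matrix (∀ k, Fin (n k)) α ℝ) (B : Matrix (∀ k, Fin (n k)) β ℝ) {t δ : ℝ} (ht : 0 ≤ t)
    (hδ : 0 ≤ δ) (hm : 3 ^ q * (frobSq A * frobSq B) ≤ m * (δ * t)) :
    μ.real {ω | t < frobSq (sketchError (tsMat (fun k => H k ω) fun k => V k ω) A B)} ≤ δ := by
  refine measureReal_lt_le_of_integral_le_mul (fun ω => frobSq_nonneg _)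
    (integrable_frobSq_sketchError_tsMat hH hV A B) ht hδ
    ((integral_frobSq_sketchError_tsMat_le hHV hH hV A B).trans ?_)
  have hm₀ : (0 : ℝ) < m := Nat.cast_pos.2 (NeZero.pos m)
  rwa [mul_assoc, one_div_mul_eq_div, div_le_iff₀' hm₀]

end TensorSketch

theorem tensorSketch_least_squares_proximal_general {Ω : Type*} [MeasurableSpace Ω] (μ : Measure Ω)
    [IsProbabilityMeasure μ] {q m : ℕ} [NeZero m] {n : Fin q → ℕ} {α β : Type*} [Fintype α]
    [DecidableEq α] [Fintype β] (H : ∀ k, Ω → Fin (n k) → Fin m) (V : ∀ k, Ω → Fin (n k) → ℝ)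
    (hH : ∀ k, KWiseIndepHash μ 2 (H k)) (hV : ∀ k, KWiseIndepSign μ 4 (V k))
    (hHV : IndepHashSigns μ H V) (P : Matrix (∀ k, Fin (n k)) α ℝ)
    (B : Matrix (∀ k, Fin (n k)) β ℝ) (C : Matrix α β ℝ) {σ : ℝ} (hσ : 0 ≤ σ)
    (hP : (Pᵀ * P + σ • (1 : Matrix α α ℝ)).PosDef) (Xopt : Matrix α β ℝ)
    (hXopt : ∀ X, ridgeLoss σ P B C Xopt ≤ ridgeLoss σ P B C X) {ε δ : ℝ} (hε : 0 < ε)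
    (hδ : 0 < δ) (hm : max (8 * (Fintype.card α : ℝ) ^ 2 * 3 ^ q / δ)
      (8 * (Fintype.card α : ℝ) * 3 ^ q / (ε * δ)) ≤ m) :
    1 - δ ≤ μ.real {ω |
      let S := tsMat (fun k => H k ω) (fun k => V k ω)
      ∀ Y, (∀ X, ridgeLoss σ (S * P) (S * B) C Y ≤ ridgeLoss σ (S * P) (S * B) C X) →
        ridgeLoss σ P B C Y ≤ (1 + ε) * ridgeLoss σ P B C Xopt} := by
  obtain ⟨T, hT : IsRidgeWhitening P σ T⟩ := exists_conjTranspose_mul_mul_eq_one hP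
  let S (ω : Ω) := tsMat (fun k => H k ω) fun k => V k ω
  let r := P * Xopt - B
  have hPT : frobSq (P * T) ≤ Fintype.card α := hT.frobSq_mul_le_card hσ
  obtain ⟨hm₁, hm₂⟩ := max_le_iff.1 hm
  rw [div_le_iff₀ (by positivity)] at hm₁ hm₂
  have hgram : μ.real {ω | 1 / 4 < frobSq (sketchError (S ω) (P * T) (P * T))} ≤ δ / 2 := by
    refine measureReal_lt_frobSq_sketchError_tsMat_le hHV hH hV _ _ (by norm_num) (by positivity) ?_
    calc (3 : ℝ) ^ q * (frobSq (P * T) * frobSq (P * T))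
        ≤ 3 ^ q * (Fintype.card α * Fintype.card α) := by
          gcongr
          exact frobSq_nonneg _
      _ ≤ m * (δ / 2 * (1 / 4)) := by linarith
  have hresidual :
      μ.real {ω | ε / 4 * frobSq r < frobSq (sketchError (S ω) (P * T) r)} ≤ δ / 2 := by
    have hr := frobSq_nonneg r
    refine measureReal_lt_frobSq_sketchError_tsMat_le hHV hH hV _ _ (by positivity)
      (by positivity) ?_
    calc (3 : ℝ) ^ q * (frobSq (P * T) * frobSq r)
        ≤ 3 ^ q * (Fintype.card α * frobSq r) := by gcongr
      _ = 8 * Fintype.card α * 3 ^ q / 8 * frobSq r := by ring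
      _ ≤ m * (ε * δ) / 8 * frobSq r := by gcongr
      _ = m * (δ / 2 * (ε / 4 * frobSq r)) := by ring
  rw [← add_halves δ]
  refine one_sub_add_le_measureReal_of_compl_subset_union
    (Set.compl_subset_comm.1 fun ω hω => ?_) hgram hresidual
  rw [Set.compl_union] at hω
  exact fun Y hY => ridgeLoss_le_of_frobSq_sketchError_le hT hσ hε.le hXopt hY
    (not_lt.1 hω.1) (not_lt.1 hω.2)

/-- Theorem 4.4, TensorSketch for least squares with proximal term: let
`P ∈ ℝ^{n₁⋯n_q × s}` have full column rank with `n₁⋯n_q > s`, `B ∈ ℝ^{n₁⋯n_q × n}`,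
`C ∈ ℝ^{s × n}`, `σ > 0`, and let `S` be a random TensorSketch matrix generated by mutually
independent 3-wise independent hash maps and mutually independent 4-wise independent sign
functions.  Let `X_opt` minimize `½‖PX-B‖_F² + (σ/2)‖X-C‖_F²` and `X̃_opt` minimize
`½‖SPX-SB‖_F² + (σ/2)‖X-C‖_F²`.  If `m = max{8s²(2+3^q)/δ, 8s(2+3^q)/(εδ)}` then with
probability at least `1 - δ`,
`½‖P X̃_opt - B‖_F² + (σ/2)‖X̃_opt - C‖_F² ≤ (1+ε)·OPT`. -/
theorem tensorSketch_least_squares_proximal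
    {Ω : Type*} [MeasurableSpace Ω] (μ : Measure Ω) [IsProbabilityMeasure μ]
    {q m : ℕ} [NeZero m] {n : Fin q → ℕ} {s nc : ℕ}
    (H : ∀ k, Ω → Fin (n k) → Fin m) (V : ∀ k, Ω → Fin (n k) → ℝ)
    (h3 : ∀ k, KWiseIndepHash μ 3 (H k))
    (h4 : ∀ k, KWiseIndepSign μ 4 (V k))
    (hmut : IndepHashSigns μ H V)
    (P : Matrix (∀ k, Fin (n k)) (Fin s) ℝ)
    (hrank : P.rank = s) (hcard : s < ∏ k, n k)
    (B : Matrix (∀ k, Fin (n k)) (Fin nc) ℝ) (C : Matrix (Fin s) (Fin nc) ℝ)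
    (σ : ℝ) (hσ : 0 < σ)
    (Xopt : Matrix (Fin s) (Fin nc) ℝ)
    (hXopt : ∀ X, 1 / 2 * frobSq (P * Xopt - B) + σ / 2 * frobSq (Xopt - C) ≤
      1 / 2 * frobSq (P * X - B) + σ / 2 * frobSq (X - C))
    (ε δ : ℝ) (hε : 0 < ε) (hδ : 0 < δ)
    (hm : (m : ℝ) = max (8 * (s : ℝ) ^ 2 * (2 + 3 ^ q) / δ)
      (8 * (s : ℝ) * (2 + 3 ^ q) / (ε * δ))) :
    1 - δ ≤ (μ {ω |
      let S := tsMat (fun k => H k ω) (fun k => V k ω)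
      ∀ Y : Matrix (Fin s) (Fin nc) ℝ,
        (∀ X, 1 / 2 * frobSq (S * P * Y - S * B) + σ / 2 * frobSq (Y - C) ≤
            1 / 2 * frobSq (S * P * X - S * B) + σ / 2 * frobSq (X - C)) →
          1 / 2 * frobSq (P * Y - B) + σ / 2 * frobSq (Y - C) ≤
            (1 + ε) * (1 / 2 * frobSq (P * Xopt - B) + σ / 2 * frobSq (Xopt - C))}).toReal := by
  refine tensorSketch_least_squares_proximal_general μ H V (fun k => (h3 k).mono (by norm_num)) h4
    hmut P B C hσ.le (posDef_transpose_mul_self_add_smul_one P hσ) Xopt hXopt hε hδ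
    ((max_le_max ?_ ?_).trans hm.ge) <;> gcongr <;> simp
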